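/- arXiv:2211.09417 — 2 statements merged into one kernel-verified Lean document; each statement's English description precedes it below -/
import Mathlib

section
/- For every integer n ≥ 2, the number of binary words z of length n that begin with the letter 0 and are not balanced while every proper factor of z is balanced equals n − φ(n) − 1, where φ is the Euler totient function; moreover, every such word z is a Lyndon word (for the order 0 < 1). -/
/-- The lower Christoffel word `w_{a,b}`: the binary word of length `a+b` whose
`k`-th letter (1-based) is `⌊kb/(a+b)⌋ - ⌊(k-1)b/(a+b)⌋` (with `false = 0`, `true = 1`). -/
def lowerChristoffel (a b : ℕ) : List Bool :=
  (List.range (a + b)).map fun i => decide ((i + 1) * b / (a + b) ≠ i * b / (a + b))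

/-- The upper Christoffel word `W_{a,b}`: the binary word of length `a+b` whose
`k`-th letter is `⌈kb/(a+b)⌉ - ⌈(k-1)b/(a+b)⌉`. -/
def upperChristoffel (a b : ℕ) : List Bool :=
  (List.range (a + b)).map fun i =>
    decide (((i + 1) * b + (a + b) - 1) / (a + b) ≠ (i * b + (a + b) - 1) / (a + b))

/-- `p` is a period of `w`: `p` is positive and `w_i = w_{i+p}` for all valid indices. -/
def HasPeriod (w : List Bool) (p : ℕ) : Prop :=
  0 < p ∧ ∀ i, i + p < w.length → w.getD i false = w.getD (i + p) false

/-- A central word: a binary word with two coprime periods `p`, `q` and length `p + q - 2`. -/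
def IsCentral (w : List Bool) : Prop :=
  ∃ p q : ℕ, Nat.Coprime p q ∧ HasPeriod w p ∧ HasPeriod w q ∧ w.length + 2 = p + q

/-- A binary word is balanced if any two factors of the same length have numbers of `1`s
differing by at most `1`. -/
def BalancedWord (w : List Bool) : Prop :=
  ∀ u v : List Bool, u <:+: w → v <:+: w → u.length = v.length →
    |(u.count true : ℤ) - (v.count true : ℤ)| ≤ 1

/-- `w^m`: the `m`-th power of the word `w`. -/
def wpow (w : List Bool) (m : ℕ) : List Bool := (List.replicate m w).flatten

/-- A word is primitive if it is not a proper power. -/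
def IsPrimitiveWord (w : List Bool) : Prop := ¬ ∃ (v : List Bool) (m : ℕ), 2 ≤ m ∧ w = wpow v m

/-- A Lyndon word: a nonempty primitive word lexicographically strictly smaller than all
of its proper nonempty suffixes (for the order `0 < 1`, i.e. `false < true`). -/
def IsLyndonWord (w : List Bool) : Prop :=
  w ≠ [] ∧ IsPrimitiveWord w ∧
    ∀ u v : List Bool, w = u ++ v → u ≠ [] → v ≠ [] → List.Lex (· < ·) w v

/-- `p` is the minimal period of `w`. -/
def IsMinPeriod (w : List Bool) (p : ℕ) : Prop :=
  HasPeriod w p ∧ ∀ q : ℕ, HasPeriod w q → p ≤ q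

/-- `u` is a factor of the infinite periodic word `w^ω`. -/
def IsOmegaFactor (u w : List Bool) : Prop := ∃ m : ℕ, u <:+: wpow w m

/-- A primitive Christoffel word: a lower or upper Christoffel word `w_{a,b}` with
`gcd(a,b) = 1`. -/
def IsPrimitiveChristoffel (c : List Bool) : Prop :=
  ∃ a b : ℕ, Nat.Coprime a b ∧ (c = lowerChristoffel a b ∨ c = upperChristoffel a b)

/-!
Counting the ones along the prefixes of a word `z` of length `n` gives a lattice path `S` from
`(0, 0)` to `(n, S n)`. If `z` starts with `0` and is minimal non-balanced, then balance can only
fail between a prefix and the suffix of the same length `l`, so `S l + S (n - l) + 2 ≤ S n`.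
Put `e i = i * S n - n * S i`. Balance of the proper factors makes `n - e` subadditive modulo `n`,
hence nonnegative, so `e ≤ n`; as `e l + e (n - l) ≥ 2 * n`, both terms equal `n`. Comparing the
slopes of windows with that of the prefix of length `l` then gives `0 < e`. Thus `S` is the highest
lattice path strictly below its chord, and `n ∣ l * S n` with `0 < l < n`, so `n` and `S n` are not
coprime. Conversely, each `0 < b < n` not coprime to `n` is the number of ones of exactly one such
word. Being strictly below its chord, `S` is superadditive, which is the Lyndon property.
-/

section WordLemmas

/-- A minimal forbidden word of the language of balanced words. -/
def IsMinimalForbidden (z : List Bool) : Prop :=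
  ¬ BalancedWord z ∧ ∀ u : List Bool, u <:+: z → u ≠ z → BalancedWord u

theorem BalancedWord.of_infix {u w : List Bool} (hw : BalancedWord w) (hu : u <:+: w) :
    BalancedWord u :=
  fun f g hf hg => hw f g (hf.trans hu) (hg.trans hu)

theorem infix_dropLast_or_infix_tail {α : Type*} {u w : List α} (hu : u <:+: w) (hne : u ≠ w) :
    u <:+: w.dropLast ∨ u <:+: w.tail := by
  obtain ⟨s, t, rfl⟩ := hu
  rcases s with _ | ⟨a, s⟩
  · rcases t.eq_nil_or_concat with rfl | ⟨t, b, rfl⟩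
    · simp at hne
    · exact Or.inl ⟨[], t, by simp [← List.append_assoc]⟩
  · exact Or.inr ⟨s, t, by simp⟩

theorem forall_proper_balancedWord_iff {z : List Bool} (hz : z ≠ []) :
    (∀ u : List Bool, u <:+: z → u ≠ z → BalancedWord u) ↔
      BalancedWord z.dropLast ∧ BalancedWord z.tail := by
  have hlen : 0 < z.length := List.length_pos_iff.2 hz
  refine ⟨fun h => ⟨h _ z.dropLast_prefix.isInfix fun he => ?_,
    h _ z.tail_suffix.isInfix fun he => ?_⟩, fun h u hu hne => ?_⟩
  · have := congrArg List.length he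
    rw [List.length_dropLast] at this
    omega
  · have := congrArg List.length he
    rw [List.length_tail] at this
    omega
  · exact (infix_dropLast_or_infix_tail hu hne).elim h.1.of_infix h.2.of_infix

theorem isPrimitiveWord_of_forall_lt_suffix {w : List Bool} (hw : w ≠ [])
    (h : ∀ u v : List Bool, w = u ++ v → u ≠ [] → v ≠ [] → List.Lex (· < ·) w v) :
    IsPrimitiveWord w := by
  rintro ⟨v, m, hm, rfl⟩
  obtain ⟨k, rfl⟩ := Nat.exists_eq_add_of_le' hm
  have hv : v ≠ [] := by
    rintro rfl
    simp [wpow] at hw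
  have hprefix : wpow v (k + 2) = v ++ wpow v (k + 1) := by
    simp [wpow, List.replicate_succ]
  have hsuffix : wpow v (k + 2) = wpow v (k + 1) ++ v := by
    simp [wpow, List.replicate_succ' (n := k + 1)]
  have hlex := h _ _ hsuffix (by simp [wpow, List.replicate_succ, hv]) hv
  rw [hprefix] at hlex
  exact List.le_append_left hlex

end WordLemmas

section PrefixCount

/-- The number of ones among the first `i` letters of `w`: the height at abscissa `i` of the
lattice path of `w`. It is integer-valued so that heights can be subtracted. -/
def prefixCount (w : List Bool) (i : ℕ) : ℤ := ((w.take i).count true : ℤ)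

@[simp]
theorem prefixCount_zero (w : List Bool) : prefixCount w 0 = 0 := by simp [prefixCount]

theorem prefixCount_length (w : List Bool) : prefixCount w w.length = w.count true := by
  simp [prefixCount]

theorem prefixCount_cons_succ (a : Bool) (w : List Bool) (i : ℕ) :
    prefixCount (a :: w) (i + 1) = prefixCount w i + if a then 1 else 0 := by
  cases a <;> simp [prefixCount]

theorem prefixCount_append_of_le_length {u : List Bool} (v : List Bool) {i : ℕ}
    (hi : i ≤ u.length) : prefixCount (u ++ v) i = prefixCount u i := by
  simp [prefixCount, List.take_append_of_le_length hi]

theorem prefixCount_append_length_add (u v : List Bool) (i : ℕ) :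
    prefixCount (u ++ v) (u.length + i) = prefixCount u u.length + prefixCount v i := by
  simp [prefixCount, List.take_append, List.take_of_length_le (Nat.le_add_right u.length i)]

theorem prefixCount_le_succ (w : List Bool) (i : ℕ) :
    prefixCount w i ≤ prefixCount w (i + 1) := by
  have := (List.take_sublist_take_left (l := w) (Nat.le_add_right i 1)).count_le true
  simpa [prefixCount] using this

theorem prefixCount_succ_le (w : List Bool) (i : ℕ) :
    prefixCount w (i + 1) ≤ prefixCount w i + 1 := by
  have hone : (w[i]?.toList).count true ≤ 1 :=
    List.count_le_length.trans (by cases w[i]? <;> simp)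
  rw [prefixCount, prefixCount, List.take_add_one, List.count_append]
  omega

theorem monotone_prefixCount (w : List Bool) : Monotone (prefixCount w) :=
  monotone_nat_of_le_succ (prefixCount_le_succ w)

theorem head?_eq_some_false_iff {w : List Bool} (hw : w ≠ []) :
    w.head? = some false ↔ prefixCount w 1 = 0 := by
  obtain ⟨a, w, rfl⟩ := List.exists_cons_of_ne_nil hw
  cases a <;> simp [prefixCount]

theorem count_take_drop (w : List Bool) (i p : ℕ) :
    (((w.drop i).take p).count true : ℤ) = prefixCount w (i + p) - prefixCount w i := by
  simp [prefixCount, List.take_add]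

theorem eq_of_prefixCount_eq {w z : List Bool} (hlen : w.length = z.length)
    (h : ∀ i ≤ w.length, prefixCount w i = prefixCount z i) : w = z := by
  induction w generalizing z with
  | nil => exact (List.length_eq_zero_iff.1 hlen.symm).symm
  | cons a w ih =>
    obtain _ | ⟨b, z⟩ := z
    · simp at hlen
    have hab : a = b := by
      have := h 1 (by simp)
      cases a <;> cases b <;> simp_all [prefixCount]
    subst hab
    congr 1
    refine ih (by simpa using hlen) fun i hi => ?_
    simpa [prefixCount_cons_succ] using h (i + 1) (by simpa using hi)

theorem exists_prefixCount_eq {S : ℕ → ℤ} (h0 : S 0 = 0) {n : ℕ}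
    (hstep : ∀ i < n, S i ≤ S (i + 1) ∧ S (i + 1) ≤ S i + 1) :
    ∃ w : List Bool, w.length = n ∧ ∀ i ≤ n, prefixCount w i = S i := by
  induction n with
  | zero => exact ⟨[], rfl, fun i hi => by simp [Nat.le_zero.1 hi, h0]⟩
  | succ n ih =>
    obtain ⟨w, rfl, hw⟩ := ih fun i hi => hstep i (by omega)
    refine ⟨w ++ [decide (S w.length < S (w.length + 1))], by simp, fun i hi => ?_⟩
    rcases hi.lt_or_eq with hlt | rfl
    · rw [prefixCount_append_of_le_length _ (by omega), hw i (by omega)]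
    · rw [prefixCount_append_length_add, hw _ le_rfl]
      have := hstep w.length (by omega)
      by_cases hup : S w.length < S (w.length + 1)
      · have hlast : prefixCount [decide (S w.length < S (w.length + 1))] 1 = 1 := by
          simp [hup, prefixCount]
        omega
      · have hlast : prefixCount [decide (S w.length < S (w.length + 1))] 1 = 0 := by
          simp [hup, prefixCount]
        omega

theorem lex_of_prefixCount_le {w v : List Bool}
    (hle : ∀ i ≤ v.length, prefixCount w i ≤ prefixCount v i)
    (hlt : prefixCount w v.length < prefixCount v v.length) : List.Lex (· < ·) w v := by
  induction v generalizing w with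
  | nil => simp at hlt
  | cons b v ih =>
    obtain _ | ⟨a, w⟩ := w
    · exact List.Lex.nil
    by_cases hab : a = b
    · subst hab
      refine List.Lex.cons (ih (fun i hi => ?_) ?_)
      · simpa [prefixCount_cons_succ] using hle (i + 1) (by simpa using hi)
      · simpa [prefixCount_cons_succ] using hlt
    · refine List.Lex.rel ?_
      have := hle 1 (by simp)
      cases a <;> cases b <;> simp_all [prefixCount]

end PrefixCount

section BalancedOn

/-- Balance of a lattice path on the interval `[A, B]`: over any two windows of `[A, B]` of equal
length, the heights of `S` increase by amounts differing by at most `1`. By symmetry in `i` and `j`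
only one of the two inequalities is recorded. -/
def BalancedOn (S : ℕ → ℤ) (A B : ℕ) : Prop :=
  ∀ i j p, A ≤ i → i + p ≤ B → A ≤ j → j + p ≤ B → S (i + p) + S j ≤ S (j + p) + S i + 1

theorem balancedWord_iff_balancedOn (w : List Bool) :
    BalancedWord w ↔ BalancedOn (prefixCount w) 0 w.length := by
  constructor
  · intro hw i j p _ hi _ hj
    have hinfix (k : ℕ) : (w.drop k).take p <:+: w :=
      (List.take_prefix _ _).isInfix.trans (List.drop_suffix _ _).isInfix
    have hcount := hw _ _ (hinfix i) (hinfix j) (by simp; omega)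
    rw [count_take_drop, count_take_drop, abs_le] at hcount
    linarith [hcount.2]
  · rintro hS f g ⟨s, t, hf⟩ ⟨s', t', hg⟩ hlen
    have hfactor {f s t : List Bool} (h : s ++ f ++ t = w) :
        s.length + f.length ≤ w.length ∧
          (f.count true : ℤ) = prefixCount w (s.length + f.length) - prefixCount w s.length := by
      subst h
      exact ⟨by simp, by simp [← count_take_drop]⟩
    obtain ⟨hfle, hfcount⟩ := hfactor hf
    obtain ⟨hgle, hgcount⟩ := hfactor hg
    rw [← hlen] at hgle hgcount
    have hfg := hS _ _ _ (Nat.zero_le _) hfle (Nat.zero_le _) hgle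
    have hgf := hS _ _ _ (Nat.zero_le _) hgle (Nat.zero_le _) hfle
    rw [abs_le]
    constructor <;> linarith

theorem balancedWord_dropLast_iff (w : List Bool) :
    BalancedWord w.dropLast ↔ BalancedOn (prefixCount w) 0 (w.length - 1) := by
  have hcount {i : ℕ} (hi : i ≤ w.length - 1) :
      prefixCount w.dropLast i = prefixCount w i := by
    rw [prefixCount, prefixCount, List.dropLast_eq_take, List.take_take, min_eq_left hi]
  rw [balancedWord_iff_balancedOn, List.length_dropLast]
  refine forall₅_congr fun i j p _ hi => forall₂_congr fun _ hj => ?_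
  rw [hcount hi, hcount hj, hcount (by omega), hcount (by omega)]

theorem balancedWord_tail_iff (w : List Bool) :
    BalancedWord w.tail ↔ BalancedOn (prefixCount w) 1 w.length := by
  rw [balancedWord_iff_balancedOn]
  obtain _ | ⟨a, w⟩ := w
  · simp [BalancedOn, prefixCount]
  constructor
  · intro h i j p hi hip hj hjp
    obtain ⟨i, rfl⟩ := Nat.exists_eq_add_of_le' hi
    obtain ⟨j, rfl⟩ := Nat.exists_eq_add_of_le' hj
    rw [List.length_cons] at hip hjp
    have := h i j p (by omega) (by simp; omega) (by omega) (by simp; omega)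
    simp only [Nat.add_right_comm _ 1, prefixCount_cons_succ, List.tail_cons] at this ⊢
    linarith
  · intro h i j p _ hip _ hjp
    rw [List.tail_cons] at hip hjp
    have := h (i + 1) (j + 1) p (by omega) (by simp; omega) (by omega) (by simp; omega)
    simp only [Nat.add_right_comm _ 1, prefixCount_cons_succ, List.tail_cons] at this ⊢
    linarith

theorem BalancedOn.slope_lt {S : ℕ → ℤ} {A B : ℕ} (h : BalancedOn S A B) {i j p q : ℕ}
    (hp : 0 < p) (hq : 0 < q) (hi : A ≤ i) (hip : i + p ≤ B) (hj : A ≤ j) (hjq : j + q ≤ B) :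
    (q : ℤ) * (S (i + p) - S i - 1) < p * (S (j + q) - S j + 1) := by
  have hp' : (0 : ℤ) < p := by exact_mod_cast hp
  have hq' : (0 : ℤ) < q := by exact_mod_cast hq
  -- Euclid's algorithm on the window lengths: cut a shorter window off the longer one.
  rcases lt_trichotomy p q with hpq | rfl | hqp
  · obtain ⟨r, hr, rfl⟩ := exists_pos_add_of_lt' hpq
    have hrest := h.slope_lt hp hr hi hip (j := j + p) (by omega) (by omega)
    have hwindow := h i j p hi hip hj (by omega)
    rw [add_assoc] at hrest
    push_cast at *
    nlinarith
  · have := h i j p hi hip hj hjq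
    nlinarith
  · obtain ⟨r, hr, rfl⟩ := exists_pos_add_of_lt' hqp
    have hrest := h.slope_lt hr hq (i := i + q) (by omega) (by omega) hj hjq
    have hwindow := h i j q hi (by omega) hj hjq
    rw [add_assoc] at hrest
    push_cast at *
    nlinarith
termination_by p + q

end BalancedOn

section Chord

/-- `n` times the vertical distance at abscissa `i` from the path `S` up to the line through
`(0, 0)` and `(n, S n)`. -/
def chordDefect (n : ℕ) (S : ℕ → ℤ) (i : ℕ) : ℤ := i * S n - n * S i

/-- The path `S` starts at the origin and, strictly between the abscissas `0` and `n`, runs through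
the highest lattice points that are strictly below the chord from `(0, 0)` to `(n, S n)`. -/
structure HugsChord (n : ℕ) (S : ℕ → ℤ) : Prop where
  zero : S 0 = 0
  defect_pos : ∀ i, 0 < i → i < n → 0 < chordDefect n S i
  defect_le : ∀ i, 0 < i → i < n → chordDefect n S i ≤ n

variable {n : ℕ} {S T : ℕ → ℤ}

theorem chordDefect_self (n : ℕ) (S : ℕ → ℤ) : chordDefect n S n = 0 := sub_self _

theorem chordDefect_add_chordDefect_sub {l : ℕ} (hl : l ≤ n) :
    chordDefect n S l + chordDefect n S (n - l) = n * (S n - S l - S (n - l)) := by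
  simp only [chordDefect]
  push_cast [hl]
  ring

theorem mul_window_sub_window (n : ℕ) (S : ℕ → ℤ) (i j p : ℕ) :
    n * (S (i + p) - S i - (S (j + p) - S j)) =
      chordDefect n S i - chordDefect n S (i + p)
        + (chordDefect n S (j + p) - chordDefect n S j) := by
  simp only [chordDefect]
  push_cast
  ring

namespace HugsChord

theorem chordDefect_zero (h : HugsChord n S) : chordDefect n S 0 = 0 := by
  simp [chordDefect, h.zero]

theorem chordDefect_mem_Icc (h : HugsChord n S) {i : ℕ} (hi : i ≤ n) :
    chordDefect n S i ∈ Set.Icc (0 : ℤ) n := by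
  rcases i.eq_zero_or_pos with rfl | hi0
  · simp [h.chordDefect_zero]
  rcases hi.lt_or_eq with hin | rfl
  · exact ⟨(h.defect_pos i hi0 hin).le, h.defect_le i hi0 hin⟩
  · simp [chordDefect_self]

theorem congr (h : HugsChord n S) (hST : ∀ i ≤ n, T i = S i) : HugsChord n T := by
  have hdefect {i : ℕ} (hi : i < n) : chordDefect n T i = chordDefect n S i := by
    rw [chordDefect, chordDefect, hST i hi.le, hST n le_rfl]
  exact ⟨(hST 0 n.zero_le).trans h.zero, fun i hi hin => hdefect hin ▸ h.defect_pos i hi hin,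
    fun i hi hin => hdefect hin ▸ h.defect_le i hi hin⟩

theorem eq_of_end_eq (hS : HugsChord n S) (hT : HugsChord n T) (hend : S n = T n) {i : ℕ}
    (hi : i ≤ n) : S i = T i := by
  rcases i.eq_zero_or_pos with rfl | hi0
  · rw [hS.zero, hT.zero]
  rcases hi.lt_or_eq with hin | rfl
  · have hSpos := hS.defect_pos i hi0 hin
    have hSle := hS.defect_le i hi0 hin
    have hTpos := hT.defect_pos i hi0 hin
    have hTle := hT.defect_le i hi0 hin
    simp only [chordDefect, hend] at hSpos hSle hTpos hTle
    have hlt : S i < T i + 1 := lt_of_mul_lt_mul_left (a := (n : ℤ)) (by linarith) (by positivity)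
    have hgt : T i < S i + 1 := lt_of_mul_lt_mul_left (a := (n : ℤ)) (by linarith) (by positivity)
    omega
  · exact hend

theorem le_succ_and_succ_le (h : HugsChord n S) (hpos : 0 < S n) (hlt : S n < n) {i : ℕ}
    (hi : i < n) : S i ≤ S (i + 1) ∧ S (i + 1) ≤ S i + 1 := by
  obtain ⟨hi0, hin⟩ := h.chordDefect_mem_Icc hi.le
  obtain ⟨hs0, hsn⟩ := h.chordDefect_mem_Icc (Nat.succ_le_of_lt hi)
  simp only [chordDefect] at hi0 hin hs0 hsn
  push_cast at hs0 hsn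
  have hlower : S i < S (i + 1) + 1 :=
    lt_of_mul_lt_mul_left (a := (n : ℤ)) (by linarith) (by positivity)
  have hupper : S (i + 1) < S i + 2 :=
    lt_of_mul_lt_mul_left (a := (n : ℤ)) (by linarith) (by positivity)
  omega

theorem window_le (h : HugsChord n S) {i j p : ℕ} (hip : i + p ≤ n) (hjp : j + p ≤ n)
    (hpos : 0 < chordDefect n S (i + p) ∨ 0 < chordDefect n S j) :
    S (i + p) + S j ≤ S (j + p) + S i + 1 := by
  have hi := h.chordDefect_mem_Icc (i := i) (by omega)
  have hip' := h.chordDefect_mem_Icc hip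
  have hj := h.chordDefect_mem_Icc (i := j) (by omega)
  have hjp' := h.chordDefect_mem_Icc hjp
  have hlt : S (i + p) - S i - (S (j + p) - S j) < 2 := by
    refine lt_of_mul_lt_mul_left (a := (n : ℤ)) ?_ (by positivity)
    rw [mul_window_sub_window]
    rcases hpos with hpos | hpos <;> linarith [hi.2, hip'.1, hj.1, hjp'.2]
  omega

theorem balancedOn_left (h : HugsChord n S) : BalancedOn S 0 (n - 1) := by
  intro i j p _ hip _ hjp
  rcases p.eq_zero_or_pos with rfl | hp
  · simp [add_comm]
  · exact h.window_le (by omega) (by omega) (.inl (h.defect_pos _ (by omega) (by omega)))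

theorem balancedOn_right (h : HugsChord n S) : BalancedOn S 1 n := by
  intro i j p _ hip _ hjp
  rcases p.eq_zero_or_pos with rfl | hp
  · simp [add_comm]
  · exact h.window_le (by omega) (by omega) (.inr (h.defect_pos _ (by omega) (by omega)))

theorem add_le (h : HugsChord n S) {i j : ℕ} (hi : 0 < i) (hin : i < n) (hij : i + j ≤ n) :
    S i + S j ≤ S (i + j) := by
  have hlt : S i + S j - 1 < S (i + j) := by
    refine lt_of_mul_lt_mul_left (a := (n : ℤ)) ?_ (by positivity)
    have hipos := h.defect_pos i hi hin
    have hj := (h.chordDefect_mem_Icc (i := j) (by omega)).1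
    have hle := (h.chordDefect_mem_Icc hij).2
    simp only [chordDefect] at hipos hj hle
    push_cast at hle
    linarith
  omega

theorem add_lt (h : HugsChord n S) {l : ℕ} (hl : 0 < l) (hln : l < n) :
    S l + S (n - l) < S n := by
  have hsum := chordDefect_add_chordDefect_sub (S := S) hln.le
  have hpos : 0 < S n - S l - S (n - l) := by
    refine pos_of_mul_pos_right (a := (n : ℤ)) ?_ (by positivity)
    linarith [h.defect_pos l hl hln, h.defect_pos (n - l) (by omega) (by omega)]
  omega

theorem chordDefect_eq_of_dvd (h : HugsChord n S) {l : ℕ} (hl : 0 < l) (hln : l < n)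
    (hdvd : (n : ℤ) ∣ l * S n) : chordDefect n S l = n :=
  le_antisymm (h.defect_le l hl hln)
    (Int.le_of_dvd (h.defect_pos l hl hln) (hdvd.sub (dvd_mul_right _ _)))

theorem not_balancedOn_of_dvd (h : HugsChord n S) {l : ℕ} (hl : 0 < l) (hln : l < n)
    (hdvd : (n : ℤ) ∣ l * S n) : ¬ BalancedOn S 0 n := by
  intro hbal
  have hdvd' : (n : ℤ) ∣ (n - l : ℕ) * S n := by
    push_cast [hln.le]
    rw [sub_mul]
    exact (dvd_mul_right _ _).sub hdvd
  have hsum := chordDefect_add_chordDefect_sub (S := S) hln.le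
  rw [h.chordDefect_eq_of_dvd hl hln hdvd,
    h.chordDefect_eq_of_dvd (by omega) (by omega) hdvd', ← mul_two] at hsum
  have htwo : 2 = S n - S l - S (n - l) := mul_left_cancel₀ (by norm_cast; omega) hsum
  have hwindow := hbal (n - l) 0 l (by omega) (by omega) (by omega) (by omega)
  rw [Nat.sub_add_cancel hln.le, zero_add, h.zero] at hwindow
  omega

end HugsChord

end Chord

section Converse

theorem nonneg_of_subadditive_mod {G : Type*} [AddCommGroup G] [LinearOrder G]
    [IsOrderedAddMonoid G] {n : ℕ} (hn : 3 ≤ n) {D : ℕ → G}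
    (hadd : ∀ i j, 0 < i → 0 < j → i + j < n → D (i + j) ≤ D i + D j)
    (hwrap : ∀ i j, i < n → j < n → n < i + j → D (i + j - n) ≤ D i + D j)
    {i : ℕ} (hi : 0 < i) (hin : i < n) : 0 ≤ D i := by
  obtain ⟨m, hm, hmin⟩ := Finset.exists_min_image (Finset.Ioo 0 n) D ⟨i, by simp [hi, hin]⟩
  simp only [Finset.mem_Ioo] at hm hmin
  refine le_trans ?_ (hmin i ⟨hi, hin⟩)
  by_contra! hneg
  rcases lt_trichotomy (m + m) n with h | h | h
  · exact absurd (hmin (m + m) ⟨by omega, h⟩)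
      ((hadd m m hm.1 hm.1 h).trans_lt (add_lt_of_neg_left _ hneg)).not_ge
  · -- Adding `m` twice is adding `n`, so it strictly decreases `D` and yet fixes the index `1`.
    have hup := hadd m 1 hm.1 one_pos (by omega)
    have hdown := hwrap m (m + 1) hm.2 (by omega) (by omega)
    rw [show m + (m + 1) - n = 1 by omega] at hdown
    exact lt_irrefl _ ((hdown.trans_lt (add_lt_of_neg_left _ hneg)).trans
      (hup.trans_lt (add_lt_of_neg_left _ hneg)))
  · exact absurd (hmin (m + m - n) ⟨by omega, by omega⟩)
      ((hwrap m m hm.2 hm.2 h).trans_lt (add_lt_of_neg_left _ hneg)).not_ge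

variable {n : ℕ} {S : ℕ → ℤ}

theorem chordDefect_le_of_balancedOn (hn : 3 ≤ n) (h0 : S 0 = 0) (hleft : BalancedOn S 0 (n - 1))
    (hright : BalancedOn S 1 n) {i : ℕ} (hi : 0 < i) (hin : i < n) : chordDefect n S i ≤ n := by
  suffices 0 ≤ n - chordDefect n S i by linarith
  refine nonneg_of_subadditive_mod (D := fun i => n - chordDefect n S i) hn ?_ ?_ hi hin
  · intro i j _ hj hij
    have hwindow := hleft j 0 i (by omega) (by omega) (by omega) (by omega)
    rw [zero_add, h0, add_comm j i] at hwindow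
    simp only [chordDefect]
    push_cast
    nlinarith
  · intro i j hi hj hij
    have hwindow := hright i (i + j - n) (n - i) (by omega) (by omega) (by omega) (by omega)
    rw [show i + (n - i) = n by omega, show i + j - n + (n - i) = j by omega] at hwindow
    simp only [chordDefect]
    push_cast [hij.le]
    nlinarith

theorem exists_add_two_le_of_not_balancedOn (hS : Monotone S) (h0 : S 0 = 0) (h1 : S 1 = 0)
    (hleft : BalancedOn S 0 (n - 1)) (hright : BalancedOn S 1 n) (hbal : ¬ BalancedOn S 0 n) :
    ∃ l, 0 < l ∧ l < n ∧ S l + S (n - l) + 2 ≤ S n := by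
  unfold BalancedOn at hbal
  push Not at hbal
  obtain ⟨i, j, p, -, hip, -, hjp, hviol⟩ := hbal
  have hp : p ≠ 0 := by
    rintro rfl
    rw [add_zero, add_zero] at hviol
    linarith
  have hij : i ≠ j := by
    rintro rfl
    linarith
  have hzero : i = 0 ∨ j = 0 := by
    by_contra! hne
    exact hviol.not_ge (hright i j p (by omega) hip (by omega) hjp)
  have hend : i + p = n ∨ j + p = n := by
    by_contra! hne
    exact hviol.not_ge (hleft i j p (by omega) (by omega) (by omega) (by omega))
  rcases hzero with rfl | rfl
  · -- A prefix starting with `0` cannot be the heavier window: drop its first letter.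
    have hwindow := hright 1 j (p - 1) (by omega) (by omega) (by omega) (by omega)
    have hmono := hS (show j + (p - 1) ≤ j + p by omega)
    rw [Nat.add_sub_cancel' (by omega)] at hwindow
    rw [zero_add] at hviol
    linarith
  · refine ⟨p, by omega, by omega, ?_⟩
    rw [show i + p = n by omega, zero_add, h0] at hviol
    rw [show n - p = i by omega]
    linarith

theorem chordDefect_pos_of_balancedOn (h0 : S 0 = 0) (hleft : BalancedOn S 0 (n - 1))
    (hright : BalancedOn S 1 n) {l : ℕ} (hl : 0 < l) (hln : l < n)
    (hdefect : chordDefect n S l = n) (hsplit : S n - S (n - l) = S l + 2) {i : ℕ} (hi : 0 < i)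
    (hin : i < n) : 0 < chordDefect n S i := by
  have hl' : (0 : ℤ) < l := by exact_mod_cast hl
  have hn' : (0 : ℤ) < n := by exact_mod_cast hi.trans hin
  have hslope : (l : ℤ) * S i < i * (S l + 1) := by
    rcases lt_trichotomy i l with hil | rfl | hli
    · have := hright.slope_lt (i := n - l) (p := l) (j := i) (q := l - i) hl (by omega)
        (by omega) (by omega) (by omega) (by omega)
      rw [Nat.sub_add_cancel hln.le, Nat.add_sub_cancel' hil.le, hsplit] at this
      push_cast [hil.le] at this
      linarith
    · linarith
    · have := hleft.slope_lt (i := l) (p := i - l) (j := 0) (q := l) (by omega) hl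
        (by omega) (by omega) (by omega) (by omega)
      rw [Nat.add_sub_cancel' hli.le, zero_add, h0] at this
      push_cast [hli.le] at this
      linarith
  have hon : (l : ℤ) * S n = n * (S l + 1) := by
    rw [chordDefect] at hdefect
    linarith
  rw [chordDefect, sub_pos]
  refine lt_of_mul_lt_mul_left (a := (l : ℤ)) ?_ hl'.le
  calc (l : ℤ) * (n * S i) = n * (l * S i) := by ring
    _ < n * (i * (S l + 1)) := by gcongr
    _ = i * (n * (S l + 1)) := by ring
    _ = l * (i * S n) := by rw [← hon]; ring

theorem hugsChord_and_dvd_of_balancedOn (hn : 3 ≤ n) (h0 : S 0 = 0)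
    (hleft : BalancedOn S 0 (n - 1)) (hright : BalancedOn S 1 n) {l : ℕ} (hl : 0 < l)
    (hln : l < n) (hle : S l + S (n - l) + 2 ≤ S n) :
    HugsChord n S ∧ (n : ℤ) ∣ l * S n := by
  have hn' : (0 : ℤ) < n := by exact_mod_cast hl.trans hln
  have hdefect_le {i : ℕ} (hi : 0 < i) (hin : i < n) : chordDefect n S i ≤ n :=
    chordDefect_le_of_balancedOn hn h0 hleft hright hi hin
  have hsum := chordDefect_add_chordDefect_sub (S := S) hln.le
  have hdefect_l := hdefect_le hl hln
  have hdefect_sub := hdefect_le (i := n - l) (by omega) (by omega)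
  have hsplit : S n - S (n - l) = S l + 2 := by
    refine le_antisymm ?_ (by linarith)
    suffices S n - S l - S (n - l) ≤ 2 by linarith
    exact le_of_mul_le_mul_left (by linarith) hn'
  have hdefect : chordDefect n S l = n := by
    rw [show S n - S l - S (n - l) = 2 by linarith] at hsum
    linarith
  refine ⟨⟨h0, fun i => chordDefect_pos_of_balancedOn h0 hleft hright hl hln hdefect hsplit,
    fun i => hdefect_le⟩, S l + 1, ?_⟩
  rw [chordDefect] at hdefect
  linarith

end Converse

theorem exists_dvd_mul_iff_not_coprime {n : ℕ} (hn : 0 < n) (b : ℕ) :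
    (∃ l, 0 < l ∧ l < n ∧ n ∣ l * b) ↔ ¬ n.Coprime b := by
  constructor
  · rintro ⟨l, hl, hln, hdvd⟩ hco
    exact hln.not_ge (Nat.le_of_dvd hl (hco.dvd_of_dvd_mul_right hdvd))
  · intro hco
    have hgcd : 0 < n.gcd b := Nat.gcd_pos_of_pos_left b hn
    have hne : n.gcd b ≠ 1 := hco
    refine ⟨n / n.gcd b, Nat.div_pos (Nat.gcd_le_left b hn) hgcd,
      Nat.div_lt_self hn (by omega), b / n.gcd b, ?_⟩
    rw [Nat.div_mul_right_comm (Nat.gcd_dvd_left n b), Nat.mul_div_assoc _ (Nat.gcd_dvd_right n b)]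

section HugsChordWords

variable {z : List Bool}

theorem HugsChord.prefixCount_one (hz : 2 ≤ z.length)
    (h : HugsChord z.length (prefixCount z)) : prefixCount z 1 = 0 := by
  have hpos := h.defect_pos 1 one_pos hz
  have hcount : (z.count true : ℤ) ≤ z.length := by exact_mod_cast List.count_le_length
  rw [chordDefect, prefixCount_length, Nat.cast_one, one_mul] at hpos
  have hlt : prefixCount z 1 < 1 :=
    lt_of_mul_lt_mul_left (a := (z.length : ℤ)) (by linarith) (by positivity)
  have hnonneg := monotone_prefixCount z zero_le_one
  rw [prefixCount_zero] at hnonneg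
  omega

theorem HugsChord.count_mem_Ioo (hz : 2 ≤ z.length)
    (h : HugsChord z.length (prefixCount z)) : z.count true ∈ Set.Ioo 0 z.length := by
  obtain ⟨t, rfl⟩ := List.head?_eq_some_iff.1
    ((head?_eq_some_false_iff (List.ne_nil_of_length_pos (by omega))).2 (h.prefixCount_one hz))
  have hpos := h.defect_pos 1 one_pos hz
  rw [chordDefect, prefixCount_length, h.prefixCount_one hz] at hpos
  have hle : t.count true ≤ t.length := List.count_le_length
  rw [List.count_cons_of_ne Bool.false_ne_true] at hpos ⊢
  exact ⟨by omega, by rw [List.length_cons]; omega⟩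

theorem isMinimalForbidden_iff_hugsChord (hz : z ≠ []) :
    z.head? = some false ∧ IsMinimalForbidden z ↔
      HugsChord z.length (prefixCount z) ∧ ¬ z.length.Coprime (z.count true) := by
  have hlen : 0 < z.length := List.length_pos_iff.2 hz
  rw [head?_eq_some_false_iff hz, IsMinimalForbidden, balancedWord_iff_balancedOn,
    forall_proper_balancedWord_iff hz, balancedWord_dropLast_iff, balancedWord_tail_iff,
    ← exists_dvd_mul_iff_not_coprime hlen]
  constructor
  · rintro ⟨hone, hbal, hleft, hright⟩
    obtain ⟨l, hl, hln, hle⟩ := exists_add_two_le_of_not_balancedOn (monotone_prefixCount z)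
      (prefixCount_zero z) hone hleft hright hbal
    have hthree : 3 ≤ z.length := by
      by_contra! hlt
      obtain rfl : l = 1 := by omega
      rw [show z.length = 1 + 1 by omega, Nat.add_sub_cancel, hone] at hle
      linarith [prefixCount_succ_le z 1]
    obtain ⟨hchord, hdvd⟩ := hugsChord_and_dvd_of_balancedOn hthree (prefixCount_zero z)
      hleft hright hl hln hle
    rw [prefixCount_length] at hdvd
    exact ⟨hchord, l, hl, hln, by exact_mod_cast hdvd⟩
  · rintro ⟨hchord, l, hl, hln, hdvd⟩
    have hdvd' : (z.length : ℤ) ∣ l * prefixCount z z.length := by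
      rw [prefixCount_length]
      exact_mod_cast hdvd
    exact ⟨hchord.prefixCount_one (by omega), hchord.not_balancedOn_of_dvd hl hln hdvd',
      hchord.balancedOn_left, hchord.balancedOn_right⟩

theorem HugsChord.isLyndonWord (hz : z ≠ []) (h : HugsChord z.length (prefixCount z)) :
    IsLyndonWord z := by
  have hsuffix (u v : List Bool) (huv : z = u ++ v) (hu : u ≠ []) (hv : v ≠ []) :
      List.Lex (· < ·) z v := by
    have hu' : 0 < u.length := List.length_pos_iff.2 hu
    have hv' : 0 < v.length := List.length_pos_iff.2 hv
    have hlen : z.length = u.length + v.length := by rw [huv, List.length_append]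
    have hcount (i : ℕ) :
        prefixCount z (u.length + i) = prefixCount z u.length + prefixCount v i := by
      rw [huv, prefixCount_append_length_add, prefixCount_append_of_le_length _ le_rfl]
    refine lex_of_prefixCount_le (fun i hi => ?_) ?_
    · have := h.add_le hu' (by omega) (show u.length + i ≤ z.length by omega)
      linarith [hcount i]
    · have := h.add_lt hu' (by omega)
      rw [hlen, Nat.add_sub_cancel_left] at this
      linarith [hcount v.length]
  exact ⟨hz, isPrimitiveWord_of_forall_lt_suffix hz hsuffix, hsuffix⟩

end HugsChordWords

section Counting

theorem card_filter_not_coprime {n : ℕ} (hn : 2 ≤ n) :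
    ((Finset.Ioo 0 n).filter fun b => ¬ n.Coprime b).card = n - n.totient - 1 := by
  have htotient : n.totient = ((Finset.Ioo 0 n).filter n.Coprime).card := by
    rw [Nat.totient_eq_card_coprime]
    congr 1
    ext b
    rcases b.eq_zero_or_pos with rfl | hb
    · simp [show n ≠ 1 by omega]
    · simp [hb]
  have hsplit := Finset.card_filter_add_card_filter_not (s := Finset.Ioo 0 n) n.Coprime
  rw [Nat.card_Ioo, ← htotient] at hsplit
  omega

theorem exists_hugsChord {n : ℕ} {b : ℕ} (hb : 0 < b) (hbn : b < n) :
    ∃ z : List Bool, z.length = n ∧ z.count true = b ∧ HugsChord n (prefixCount z) := by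
  let S : ℕ → ℤ := fun i => if i = 0 then 0 else if i = n then b else (i * b - 1) / n
  have hSn : S n = b := by simp [S, (hb.trans hbn).ne']
  have hS : HugsChord n S := by
    have hdiv {i : ℕ} (hi : 0 < i) (hin : i < n) : S i = (i * b - 1) / n := by
      simp [S, hi.ne', hin.ne]
    refine ⟨by simp [S], fun i hi hin => ?_, fun i hi hin => ?_⟩
    · have := Int.mul_ediv_self_le (x := i * b - 1) (k := n) (by omega)
      rw [chordDefect, hSn, hdiv hi hin]
      omega
    · have := Int.lt_mul_ediv_self_add (x := i * b - 1) (k := n) (by omega)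
      rw [chordDefect, hSn, hdiv hi hin]
      omega
  obtain ⟨z, rfl, hz⟩ := exists_prefixCount_eq hS.zero fun i hi =>
    hS.le_succ_and_succ_le (by omega) (by omega) hi
  refine ⟨z, rfl, ?_, hS.congr hz⟩
  have := hz _ le_rfl
  rw [prefixCount_length, hSn] at this
  exact_mod_cast this

theorem ncard_hugsChord_not_coprime {n : ℕ} (hn : 2 ≤ n) :
    {z : List Bool | z.length = n ∧ HugsChord n (prefixCount z) ∧
      ¬ n.Coprime (z.count true)}.ncard = n - n.totient - 1 := by
  rw [← card_filter_not_coprime hn, ← Set.ncard_coe_finset]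
  refine Set.BijOn.ncard_eq (f := List.count true) ⟨?_, ?_, ?_⟩
  · rintro z ⟨rfl, hz, hco⟩
    simpa [hco] using hz.count_mem_Ioo hn
  · rintro z ⟨rfl, hz, -⟩ w ⟨hlen, hw, -⟩ hcount
    refine eq_of_prefixCount_eq hlen.symm fun i hi => hz.eq_of_end_eq hw ?_ hi
    rw [prefixCount_length, ← hlen, prefixCount_length, hcount]
  · intro b hb
    simp only [Finset.coe_filter, Finset.mem_Ioo, Set.mem_ofPred_eq] at hb
    obtain ⟨z, hlen, rfl, hz⟩ := exists_hugsChord hb.1.1 hb.1.2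
    exact ⟨z, ⟨hlen, hz, hb.2⟩, rfl⟩

end Counting

/-- For every `n ≥ 2`, there are exactly `n − φ(n) − 1` minimal forbidden
words of length `n` for the balanced language that start with `0`, and all of them are
Lyndon words. -/
theorem stmt15 (n : ℕ) (hn : 2 ≤ n) :
    Set.ncard {z : List Bool | z.length = n ∧ z.head? = some false ∧
        ¬ BalancedWord z ∧ ∀ u : List Bool, u <:+: z → u ≠ z → BalancedWord u}
      = n - Nat.totient n - 1 ∧
    ∀ z : List Bool, z.length = n → z.head? = some false → ¬ BalancedWord z →
      (∀ u : List Bool, u <:+: z → u ≠ z → BalancedWord u) → IsLyndonWord z := by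
  have hne {z : List Bool} (hlen : z.length = n) : z ≠ [] :=
    List.ne_nil_of_length_pos (by omega)
  refine ⟨?_, fun z hlen hhead hbal hproper => ?_⟩
  · rw [← ncard_hugsChord_not_coprime hn]
    congr 1
    ext z
    refine and_congr_right fun hlen => ?_
    rw [← hlen]
    exact isMinimalForbidden_iff_hugsChord (hne hlen)
  · have hz := hne hlen
    exact ((isMinimalForbidden_iff_hugsChord hz).1 ⟨hhead, hbal, hproper⟩).1.isLyndonWord hz
end

section
/- Let S₁ be the set of binary words of the form u²v² or (u²v²)^R, where w = u·v is the standard factorization of a primitive lower Christoffel word w of length at least 2, and let S₂ be the set of binary words of the form y·w·x where {x,y} = {0,1} and x·w·y is the square of a primitive Christoffel word. Then S₁ = S₂. -/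
/-- `w = u ++ v` is the standard factorization of the Lyndon word `w`: `v` is the
lexicographically least nonempty proper suffix of `w`. -/
def StdFact (w u v : List Bool) : Prop :=
  w = u ++ v ∧ u ≠ [] ∧ v ≠ [] ∧
    ∀ s : List Bool, s ≠ [] → s ≠ w → s <:+ w → (v = s ∨ List.Lex (· < ·) v s)

/-!
Read the primitive lower Christoffel word of slope `b / a` as the coding of the rotation
`x ↦ x + b` of `ℤ/n`, `n = a + b`, started at `0`; the upper one is the coding started at `-1`, and
it is the reversal of the lower one. If `k * b = 1` in `ℤ/n`, the proper suffix starting at position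
`k` is the one whose orbit starts at `1`, so it is the lexicographically least, and the standard
factorization `w = u · v` cuts `w` at `k`.

Codings started at `x - 1` and `x` differ only where the orbit of `x` enters or leaves `0`.
Hence `u = 0 p` and `v = q 1`, while the codings of the same lengths started at `-1` and `0` are
`1 p` and `q 0`.
Cutting the square of the upper word at positions `k`, `2k`, `n + k` gives orbits started at
`-1`, `0`, `1`, `0`, so the square is `1 p · u · v · q 0`, whereas `u² v² = 0 p · u · v · q 1`.
-/

section EndSwap

variable {α : Type*} {z z' c : List α}

/-- `z` arises from `z'` by exchanging its first and last letters, which are distinct: the relation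
between `y · w · x` and `x · w · y`. -/
def IsEndSwap (z z' : List α) : Prop :=
  ∃ (x y : α) (w : List α), x ≠ y ∧ z = y :: w ++ [x] ∧ z' = x :: w ++ [y]

lemma IsEndSwap.reverse (h : IsEndSwap z z') : IsEndSwap z.reverse z'.reverse := by
  obtain ⟨x, y, w, hxy, rfl, rfl⟩ := h
  exact ⟨y, x, w.reverse, hxy.symm, by simp, by simp⟩

lemma isEndSwap_reverse_iff : IsEndSwap z.reverse z'.reverse ↔ IsEndSwap z z' :=
  ⟨fun h => by simpa using h.reverse, IsEndSwap.reverse⟩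

lemma IsEndSwap.left_unique (h : IsEndSwap z c) (h' : IsEndSwap z' c) : z = z' := by
  obtain ⟨x, y, w, -, rfl, rfl⟩ := h
  obtain ⟨x', y', w', -, rfl, h⟩ := h'
  obtain ⟨hx, hwy⟩ := List.cons_eq_cons.mp h
  obtain ⟨hw, hy⟩ := List.append_inj' hwy rfl
  rw [hx, hw, List.singleton_injective hy]

lemma IsEndSwap.two_le_length_of_append_self (h : IsEndSwap z (c ++ c)) : 2 ≤ c.length := by
  obtain ⟨x, y, w, hxy, -, hc⟩ := h
  match c with
  | [] => simp at hc
  | [_] =>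
    obtain ⟨rfl, hy⟩ := List.cons_eq_cons.mp hc
    exact absurd (by simpa using congrArg List.getLast? hy) hxy
  | _ :: _ :: _ => simp

end EndSwap

lemma StdFact.unique {w u v u' v' : List Bool} (h : StdFact w u v) (h' : StdFact w u' v') :
    u = u' ∧ v = v' := by
  obtain ⟨rfl, hu, hv, hmin⟩ := h
  obtain ⟨hw, hu', hv', hmin'⟩ := h'
  have hvv' : v = v' ∨ v < v' := hmin v' hv' (by simpa [hw]) ⟨u', hw.symm⟩
  have hv'v : v' = v ∨ v' < v := hmin' v hv (by simpa) ⟨u, rfl⟩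
  obtain rfl : v = v' := le_antisymm (le_iff_eq_or_lt.mpr hvv') (le_iff_eq_or_lt.mpr hv'v)
  exact ⟨List.append_cancel_right hw, rfl⟩

section ZMod

variable {n : ℕ}

lemma natCast_mul_inj {b : ZMod n} (hb : IsUnit b) {i j : ℕ} (hi : i < n) (hj : j < n) :
    (i : ZMod n) * b = j * b ↔ i = j := by
  rw [hb.mul_left_inj, ZMod.natCast_eq_natCast_iff', Nat.mod_eq_of_lt hi, Nat.mod_eq_of_lt hj]

variable [NeZero n]

lemma val_sub_one_add_one {x : ZMod n} (hx : x ≠ 0) : (x - 1).val + 1 = x.val := by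
  have hn : n ≠ 1 := by
    rintro rfl
    exact hx (Subsingleton.elim _ _)
  have hpos : 0 < x.val := ZMod.val_pos.mpr hx
  rw [ZMod.val_sub (by rwa [ZMod.val_one'' hn]), ZMod.val_one'' hn, Nat.sub_add_cancel hpos]

lemma one_val_lt_val {x : ZMod n} (hx₀ : x ≠ 0) (hx₁ : x ≠ 1) : (1 : ZMod n).val < x.val := by
  have hn : n ≠ 1 := by
    rintro rfl
    exact hx₀ (Subsingleton.elim _ _)
  have h₀ : x.val ≠ 0 := (ZMod.val_ne_zero x).mpr hx₀
  have h₁ : x.val ≠ 1 := by simpa [ZMod.val_one'' hn] using (ZMod.val_injective n).ne hx₁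
  rw [ZMod.val_one'' hn]
  omega

lemma val_neg_one_sub_add_val_add_one (x : ZMod n) : (-1 - x).val + x.val + 1 = n := by
  obtain ⟨m, rfl⟩ := Nat.exists_eq_succ_of_ne_zero (NeZero.ne n)
  have hx : x.val ≤ (-1 : ZMod m.succ).val := by
    rw [ZMod.val_neg_one]
    exact Nat.le_of_lt_succ x.val_lt
  rw [ZMod.val_sub hx, Nat.sub_add_cancel hx, ZMod.val_neg_one]

end ZMod

section Rotation

variable {n : ℕ}

/-- The letter coding the point `x` of the rotation `x ↦ x + b` of `ℤ/n`: it is `1` exactly when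
the step from `x` to `x + b` wraps around past `n`. -/
def rotationLetter (b x : ZMod n) : Bool := decide ((x + b).val < x.val)

/-- The coding of the orbit segment `x, x + b, …, x + (m - 1) * b` of the rotation by `b`.
Christoffel words are the case `m = n` with `x = 0` (lower) or `x = -1` (upper). -/
def rotationWord (b x : ZMod n) (m : ℕ) : List Bool :=
  (List.range m).map fun i : ℕ => rotationLetter b (x + i * b)

lemma rotationLetter_zero (b : ZMod n) : rotationLetter b 0 = false := by
  simp [rotationLetter]

@[simp]
lemma length_rotationWord (b x : ZMod n) (m : ℕ) : (rotationWord b x m).length = m := by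
  simp [rotationWord]

lemma rotationWord_add (b x : ZMod n) (m m' : ℕ) :
    rotationWord b x (m + m') = rotationWord b x m ++ rotationWord b (x + m * b) m' := by
  simp only [rotationWord, List.range_add, List.map_append, List.map_map]
  congr 2
  funext i
  simp only [Function.comp_apply]
  congr 1
  push_cast
  ring

lemma rotationWord_one (b x : ZMod n) : rotationWord b x 1 = [rotationLetter b x] := by
  simp [rotationWord]

lemma rotationWord_succ (b x : ZMod n) (m : ℕ) :
    rotationWord b x (m + 1) = rotationLetter b x :: rotationWord b (x + b) m := by
  rw [add_comm, rotationWord_add, rotationWord_one, Nat.cast_one, one_mul, List.singleton_append]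

lemma rotationWord_succ' (b x : ZMod n) (m : ℕ) :
    rotationWord b x (m + 1) = rotationWord b x m ++ [rotationLetter b (x + m * b)] := by
  rw [rotationWord_add, rotationWord_one]

lemma eq_rotationWord_of_append_eq {b x : ZMod n} {m : ℕ} {p s : List Bool}
    (h : p ++ s = rotationWord b x m) : s = rotationWord b (x + p.length * b) s.length := by
  have hm : m = p.length + s.length := by simpa using (congrArg List.length h).symm
  rw [hm, rotationWord_add] at h
  exact (List.append_inj h (by simp)).2

variable [NeZero n]

lemma rotationLetter_eq_true_iff (b x : ZMod n) :
    rotationLetter b x = true ↔ n ≤ x.val + b.val := by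
  have hb := b.val_lt
  rw [rotationLetter, decide_eq_true_iff]
  rcases lt_or_ge (x.val + b.val) n with h | h
  · rw [ZMod.val_add_of_lt h]
    omega
  · have := ZMod.val_add_val_of_le h
    omega

lemma rotationLetter_reflect (b x : ZMod n) :
    rotationLetter b (-1 - (x + b)) = rotationLetter b x := by
  have h₁ := val_neg_one_sub_add_val_add_one x
  have h₂ := val_neg_one_sub_add_val_add_one (x + b)
  have hx : -1 - (x + b) + b = -1 - x := by ring
  rw [rotationLetter, rotationLetter, decide_eq_decide, hx]
  omega

lemma rotationLetter_neg_one {b : ZMod n} (hb : b ≠ 0) : rotationLetter b (-1) = true := by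
  have h := rotationLetter_reflect b (-b)
  rw [neg_add_cancel, sub_zero] at h
  rw [h, rotationLetter, decide_eq_true_iff, neg_add_cancel, ZMod.val_zero]
  exact ZMod.val_pos.mpr (neg_ne_zero.mpr hb)

lemma rotationLetter_sub_one {b x : ZMod n} (hx : x ≠ 0) (hxb : x + b ≠ 0) :
    rotationLetter b (x - 1) = rotationLetter b x := by
  have h₁ := val_sub_one_add_one hx
  have h₂ := val_sub_one_add_one hxb
  rw [rotationLetter, rotationLetter, decide_eq_decide, sub_add_eq_add_sub]
  omega

lemma rotationWord_sub_one {b x : ZMod n} {m : ℕ} (h : ∀ i ≤ m, x + i * b ≠ 0) :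
    rotationWord b (x - 1) m = rotationWord b x m := by
  refine List.map_congr_left fun i hi => ?_
  rw [List.mem_range] at hi
  rw [sub_add_eq_add_sub]
  refine rotationLetter_sub_one (h i hi.le) ?_
  have := h (i + 1) hi
  rwa [Nat.cast_add_one, add_one_mul, ← add_assoc] at this

lemma reverse_rotationWord (b x : ZMod n) (m : ℕ) :
    (rotationWord b x m).reverse = rotationWord b (-1 - (x + m * b)) m := by
  induction m generalizing x with
  | zero => rfl
  | succ m ih =>
    rw [rotationWord_succ, List.reverse_cons, ih, rotationWord_succ',
      ← rotationLetter_reflect b x]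
    push_cast
    congr! 3 <;> ring

lemma rotationLetter_le_rotationLetter (b : ZMod n) {x y : ZMod n} (hxy : x.val ≤ y.val) :
    rotationLetter b x ≤ rotationLetter b y := by
  intro hx
  rw [rotationLetter_eq_true_iff] at hx ⊢
  omega

lemma val_add_lt_val_add_of_rotationLetter_eq {b x y : ZMod n} (hxy : x.val < y.val)
    (h : rotationLetter b x = rotationLetter b y) : (x + b).val < (y + b).val := by
  rw [Bool.eq_iff_iff, rotationLetter_eq_true_iff, rotationLetter_eq_true_iff] at h
  by_cases hx : n ≤ x.val + b.val
  · have h₁ := ZMod.val_add_val_of_le hx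
    have h₂ := ZMod.val_add_val_of_le (h.mp hx)
    omega
  · rw [ZMod.val_add_of_lt (not_le.mp hx), ZMod.val_add_of_lt (not_le.mp (mt h.mpr hx))]
    omega

lemma rotationWord_lt_rotationWord {b x y : ZMod n} (m : ℕ) {m' : ℕ} (hxy : x.val < y.val)
    (hy : y + m' * b = 0) : rotationWord b x m < rotationWord b y m' := by
  induction m' generalizing x y m with
  | zero => simp_all
  | succ m' ih =>
    cases m with
    | zero =>
      rw [rotationWord_succ]
      exact List.nil_lt_cons _ _
    | succ m =>
      rw [rotationWord_succ, rotationWord_succ, List.cons_lt_cons_iff]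
      refine (rotationLetter_le_rotationLetter b hxy.le).lt_or_eq.imp_right fun h => ⟨h, ?_⟩
      refine ih m (val_add_lt_val_add_of_rotationLetter_eq hxy h) ?_
      rw [← hy]
      push_cast
      ring

end Rotation

section Factorization

variable {n : ℕ} [NeZero n] {b : ZMod n}

lemma exists_rotationWord_eq_cons (hb : IsUnit b) {k : ℕ} (hk : 0 < k) (hkn : k < n) :
    ∃ p, rotationWord b 0 k = false :: p ∧ rotationWord b (-1) k = true :: p := by
  obtain ⟨m, rfl⟩ := Nat.exists_eq_add_one.mpr hk
  have horbit : ∀ i ≤ m, b + i * b ≠ 0 := fun i hi h => by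
    have : ((i + 1 : ℕ) : ZMod n) * b = (0 : ℕ) * b := by
      push_cast
      linear_combination h
    have := (natCast_mul_inj hb (by omega) (by omega)).mp this
    omega
  have hb₀ : b ≠ 0 := by simpa using horbit 0 m.zero_le
  refine ⟨rotationWord b b m, ?_, ?_⟩
  · rw [rotationWord_succ, rotationLetter_zero, zero_add]
  · rw [rotationWord_succ, rotationLetter_neg_one hb₀, neg_add_eq_sub, rotationWord_sub_one horbit]

lemma exists_rotationWord_eq_concat (hb : IsUnit b) {l : ℕ} (hl : 0 < l) (hln : l < n)
    {x : ZMod n} (hx : x + l * b = 0) :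
    ∃ q, rotationWord b x l = q ++ [true] ∧ rotationWord b (x - 1) l = q ++ [false] := by
  obtain ⟨p, hp₀, hp₁⟩ := exists_rotationWord_eq_cons hb hl hln
  refine ⟨p.reverse, ?_, ?_⟩
  · rw [← List.reverse_cons, ← hp₁, reverse_rotationWord]
    congr 1
    linear_combination hx
  · rw [← List.reverse_cons, ← hp₀, reverse_rotationWord]
    congr 1
    linear_combination hx

lemma stdFact_rotationWord {k l : ℕ} (hk : 0 < k) (hl : 0 < l) (hkl : k + l = n)
    (hkb : k * b = 1) :
    StdFact (rotationWord b 0 n) (rotationWord b 0 k) (rotationWord b 1 l) := by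
  have hb : IsUnit b := .of_mul_eq_one_right _ hkb
  have hsplit : rotationWord b 0 n = rotationWord b 0 k ++ rotationWord b 1 l := by
    rw [← zero_add (1 : ZMod n), ← hkb, ← rotationWord_add, hkl]
  refine ⟨hsplit, List.ne_nil_of_length_pos (by simpa), List.ne_nil_of_length_pos (by simpa), ?_⟩
  rintro s hs hsw ⟨p, hps⟩
  have hslen : 0 < s.length := List.length_pos_iff.mpr hs
  have hplen : 0 < p.length := List.length_pos_iff.mpr fun hp => hsw (by simpa [hp] using hps)
  have hlen : p.length + s.length = n := by simpa using congrArg List.length hps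
  have hs_eq : s = rotationWord b (p.length * b) s.length := by
    simpa using eq_rotationWord_of_append_eq hps
  by_cases hpk : p.length = k
  · left
    rw [hs_eq, hpk, hkb, show s.length = l by omega]
  · right
    rw [hs_eq]
    refine rotationWord_lt_rotationWord l (one_val_lt_val ?_ ?_) ?_
    · rw [← zero_mul b, ← Nat.cast_zero, Ne, natCast_mul_inj hb] <;> omega
    · rw [← hkb, Ne, natCast_mul_inj hb] <;> omega
    · rw [← add_mul, ← Nat.cast_add, hlen, ZMod.natCast_self, zero_mul]

lemma isEndSwap_rotationWord {k l : ℕ} (hk : 0 < k) (hl : 0 < l) (hkl : k + l = n)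
    (hkb : k * b = 1) :
    IsEndSwap
      (rotationWord b 0 k ++ rotationWord b 0 k ++ (rotationWord b 1 l ++ rotationWord b 1 l))
      (rotationWord b (-1) n ++ rotationWord b (-1) n) := by
  have hb : IsUnit b := .of_mul_eq_one_right _ hkb
  have hlb : (1 : ZMod n) + l * b = 0 := by
    rw [← hkb, ← add_mul, ← Nat.cast_add, hkl, ZMod.natCast_self, zero_mul]
  have hsquare : rotationWord b (-1) n ++ rotationWord b (-1) n =
      rotationWord b (-1) k ++ rotationWord b 0 k ++ (rotationWord b 1 l ++ rotationWord b 0 l) :=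
    calc rotationWord b (-1) n ++ rotationWord b (-1) n
      _ = rotationWord b (-1) (n + n) := by
        rw [rotationWord_add, ZMod.natCast_self, zero_mul, add_zero]
      _ = rotationWord b (-1) (k + k + (l + l)) := by
        congr 1
        omega
      _ = _ := by
        simp only [rotationWord_add, Nat.cast_add, add_mul, hkb, hlb, neg_add_cancel,
          neg_add_cancel_left]
  obtain ⟨p, hp₀, hp₁⟩ := exists_rotationWord_eq_cons hb hk (by omega)
  obtain ⟨q, hq₁, hq₀⟩ := exists_rotationWord_eq_concat hb hl (by omega) hlb
  rw [sub_self] at hq₀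
  refine ⟨true, false, p ++ (false :: p) ++ ((q ++ [true]) ++ q), by decide, ?_, ?_⟩
  · rw [hp₀, hq₁]
    simp
  · rw [hsquare, hp₀, hp₁, hq₀, hq₁]
    simp

end Factorization

section Christoffel

variable {a b : ℕ}

@[simp]
lemma length_lowerChristoffel : (lowerChristoffel a b).length = a + b := by
  simp [lowerChristoffel]

@[simp]
lemma length_upperChristoffel : (upperChristoffel a b).length = a + b := by
  simp [upperChristoffel]

lemma rotationLetter_natCast {n b : ℕ} (hb : b < n) (x : ℕ) :
    rotationLetter (b : ZMod n) x = decide ((x + b) / n ≠ x / n) := by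
  have : NeZero n := ⟨by omega⟩
  rw [Bool.eq_iff_iff, rotationLetter_eq_true_iff, decide_eq_true_iff, ZMod.val_natCast,
    ZMod.val_natCast, Nat.add_div (by omega), Nat.div_eq_of_lt hb]
  split_ifs with h <;> simpa using h

lemma lowerChristoffel_eq_rotationWord (ha : 0 < a) :
    lowerChristoffel a b = rotationWord (b : ZMod (a + b)) 0 (a + b) := by
  refine List.map_congr_left fun i _ => ?_
  rw [zero_add, ← Nat.cast_mul, rotationLetter_natCast (by omega), add_one_mul]

lemma upperChristoffel_eq_rotationWord (ha : 0 < a) :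
    upperChristoffel a b = rotationWord (b : ZMod (a + b)) (-1) (a + b) := by
  refine List.map_congr_left fun i _ => ?_
  have hcast : (-1 + i * b : ZMod (a + b)) = (i * b + (a + b) - 1 : ℕ) := by
    rw [Nat.cast_sub (by omega), Nat.cast_add, ZMod.natCast_self]
    push_cast
    ring
  rw [hcast, rotationLetter_natCast (by omega), add_one_mul]
  congr! 3
  omega

lemma reverse_upperChristoffel (ha : 0 < a) :
    (upperChristoffel a b).reverse = lowerChristoffel a b := by
  rw [lowerChristoffel_eq_rotationWord ha, upperChristoffel_eq_rotationWord ha]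
  have : NeZero (a + b) := ⟨by omega⟩
  rw [reverse_rotationWord, ZMod.natCast_self, zero_mul, add_zero, sub_self]

lemma pos_left_of_coprime_of_two_le_add (h : a.Coprime b) (hab : 2 ≤ a + b) : 0 < a := by
  refine Nat.pos_of_ne_zero ?_
  rintro rfl
  rw [Nat.coprime_zero_left] at h
  omega

lemma exists_stdFact_and_isEndSwap (h : a.Coprime b) (hab : 2 ≤ a + b) :
    ∃ u v, StdFact (lowerChristoffel a b) u v ∧
      IsEndSwap (u ++ u ++ (v ++ v)) (upperChristoffel a b ++ upperChristoffel a b) := by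
  have ha : 0 < a := pos_left_of_coprime_of_two_le_add h hab
  have : Fact (1 < a + b) := ⟨hab⟩
  have : NeZero (a + b) := ⟨by omega⟩
  obtain ⟨k, hkn, hkb⟩ : ∃ k < a + b, (k * b : ZMod (a + b)) = 1 := by
    refine ⟨(b⁻¹ : ZMod (a + b)).val, ZMod.val_lt _, ?_⟩
    rw [ZMod.natCast_zmod_val, mul_comm, ZMod.coe_mul_inv_eq_one b (by simpa using h.symm)]
  have hk : 0 < k := by
    rw [Nat.pos_iff_ne_zero]
    rintro rfl
    simp at hkb
  obtain ⟨l, hkl⟩ := Nat.exists_eq_add_of_lt hkn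
  rw [lowerChristoffel_eq_rotationWord ha, upperChristoffel_eq_rotationWord ha]
  exact ⟨_, _, stdFact_rotationWord hk l.succ_pos hkl.symm hkb,
    isEndSwap_rotationWord hk l.succ_pos hkl.symm hkb⟩

variable {u v z : List Bool}

lemma StdFact.eq_iff_isEndSwap_upperChristoffel (hstd : StdFact (lowerChristoffel a b) u v)
    (h : a.Coprime b) (hab : 2 ≤ a + b) :
    z = u ++ u ++ (v ++ v) ↔ IsEndSwap z (upperChristoffel a b ++ upperChristoffel a b) := by
  obtain ⟨u', v', hstd', hswap⟩ := exists_stdFact_and_isEndSwap h hab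
  obtain ⟨rfl, rfl⟩ := hstd.unique hstd'
  exact ⟨fun hz => hz ▸ hswap, fun hz => hz.left_unique hswap⟩

lemma StdFact.eq_reverse_iff_isEndSwap_lowerChristoffel
    (hstd : StdFact (lowerChristoffel a b) u v) (h : a.Coprime b) (hab : 2 ≤ a + b) :
    z = (u ++ u ++ (v ++ v)).reverse ↔
      IsEndSwap z (lowerChristoffel a b ++ lowerChristoffel a b) := by
  rw [← List.reverse_eq_iff, hstd.eq_iff_isEndSwap_upperChristoffel h hab,
    ← isEndSwap_reverse_iff, List.reverse_reverse, List.reverse_append,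
    reverse_upperChristoffel (pos_left_of_coprime_of_two_le_add h hab)]

end Christoffel

/-- The words `u²v²` and their reversals, where `uv` is the standard
factorization of a primitive lower Christoffel word of length ≥ 2, are exactly the words
`y·w·x` with `{x,y} = {0,1}` and `x·w·y` the square of a primitive Christoffel word. -/
theorem stmt16 :
    {z : List Bool | ∃ w u v : List Bool,
        (∃ a b : ℕ, Nat.Coprime a b ∧ w = lowerChristoffel a b) ∧ 2 ≤ w.length ∧
        StdFact w u v ∧
        (z = u ++ u ++ (v ++ v) ∨ z = (u ++ u ++ (v ++ v)).reverse)} =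
    {z : List Bool | ∃ (x y : Bool) (w c : List Bool), x ≠ y ∧
        IsPrimitiveChristoffel c ∧ z = y :: w ++ [x] ∧ x :: w ++ [y] = c ++ c} := by
  ext z
  constructor
  · rintro ⟨_, u, v, ⟨a, b, hab, rfl⟩, hlen, hstd, hz⟩
    rw [length_lowerChristoffel] at hlen
    rw [hstd.eq_iff_isEndSwap_upperChristoffel hab hlen,
      hstd.eq_reverse_iff_isEndSwap_lowerChristoffel hab hlen] at hz
    rcases hz with ⟨x, y, w, hxy, hz, hc⟩ | ⟨x, y, w, hxy, hz, hc⟩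
    · exact ⟨x, y, w, _, hxy, ⟨a, b, hab, .inr rfl⟩, hz, hc.symm⟩
    · exact ⟨x, y, w, _, hxy, ⟨a, b, hab, .inl rfl⟩, hz, hc.symm⟩
  · rintro ⟨x, y, w, c, hxy, ⟨a, b, hab, hc⟩, hz, hcw⟩
    have hswap : IsEndSwap z (c ++ c) := ⟨x, y, w, hxy, hz, hcw.symm⟩
    have hlen : 2 ≤ a + b := by
      have := hswap.two_le_length_of_append_self
      rcases hc with rfl | rfl <;> simpa using this
    obtain ⟨u, v, hstd, -⟩ := exists_stdFact_and_isEndSwap hab hlen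
    refine ⟨_, u, v, ⟨a, b, hab, rfl⟩, by simpa, hstd, ?_⟩
    rw [hstd.eq_iff_isEndSwap_upperChristoffel hab hlen,
      hstd.eq_reverse_iff_isEndSwap_lowerChristoffel hab hlen]
    rcases hc with rfl | rfl
    · exact .inr hswap
    · exact .inl hswap
end
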